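/- Domination of the satisfiability probability by the skewed expectation of PPSs of typical totally unbalanced formulae: fix a positive rational c, set λ = 3c, and let n range over positive integers with c·n ∈ ℕ. Let x_max be an even positive integer and ε > 0 a real. Set ρ = Σ_{p : 2p > x_max} κ_{2p,p}, Δ = (x_max/2 + 1)/2, and s = Σ_{(x,p) : x > 2p ≥ 0} κ̃_{x,p} (convergent series). Define the random variable X on uniformly random formulae F : Fin (c·n) → (Fin n × Bool)³ by: X(F) = 2^{s·n} times the number of PPSs of F, if for every 0 ≤ p ≤ x ≤ x_max the number of variables having x occurrences, p of them positive, in F lies between (κ̃_{x,p} − ε)·n and (κ̃_{x,p} + ε)·n; and X(F) = 0 otherwise. If for some such x_max and ε the quantity 2^{(ρ + ε·Δ)·n} · E[X] tends to 0 as n → ∞, then the probability that a uniformly random formula F : Fin (c·n) → (Fin n × Bool)³ is satisfiable tends to 0 as n → ∞. -/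

import Mathlib

open Filter
open scoped Classical

/-- `κ_{x,p} = 2^{-x} (x choose p) e^{-λ} λ^x / x!`. -/
noncomputable def kappa (lam : ℝ) (x p : ℕ) : ℝ :=
  (2 : ℝ) ^ (-(x : ℝ)) * (Nat.choose x p : ℝ) *
    (Real.exp (-lam) * lam ^ x / (Nat.factorial x : ℝ))

/-- The totally unbalanced profile `κ̃_{x,p}`: `2κ_{x,p}` if `x > 2p`, `κ_{x,p}` if
`x = 2p`, `0` if `x < 2p`. -/
noncomputable def kappaT (lam : ℝ) (x p : ℕ) : ℝ :=
  if x < 2 * p then 0 else if 2 * p < x then 2 * kappa lam x p else kappa lam x p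

/-- Number of occurrences of the variable `v` in the formula `F`. -/
noncomputable def numOccs {n m : ℕ} (F : Fin m → Fin 3 → Fin n × Bool) (v : Fin n) : ℕ :=
  Nat.card {ij : Fin m × Fin 3 // (F ij.1 ij.2).1 = v}

/-- Number of positive occurrences of the variable `v` in the formula `F`. -/
noncomputable def numPosOccs {n m : ℕ} (F : Fin m → Fin 3 → Fin n × Bool) (v : Fin n) : ℕ :=
  Nat.card {ij : Fin m × Fin 3 // F ij.1 ij.2 = (v, true)}

/-- The assignment `A` satisfies the formula `F`. -/
def Satisfies {n m : ℕ} (F : Fin m → Fin 3 → Fin n × Bool) (A : Fin n → Bool) : Prop :=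
  ∀ i : Fin m, ∃ j : Fin 3, A (F i j).1 = (F i j).2

/-- `A` is a Positively Prime Solution (PPS) of `F`: a solution such that flipping any
single variable from `true` to `false` destroys the solution. -/
def IsPPS {n m : ℕ} (F : Fin m → Fin 3 → Fin n × Bool) (A : Fin n → Bool) : Prop :=
  Satisfies F A ∧ ∀ v : Fin n, A v = true → ¬ Satisfies F (Function.update A v false)

/-- `F` obeys the distribution `κ̃` to the accuracy `(ε, xmax)`. -/
def ObeysKT {n m : ℕ} (lam ε : ℝ) (xmax : ℕ) (F : Fin m → Fin 3 → Fin n × Bool) : Prop :=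
  ∀ x p : ℕ, p ≤ x → x ≤ xmax →
    (kappaT lam x p - ε) * (n : ℝ) ≤
        (Nat.card {v : Fin n // numOccs F v = x ∧ numPosOccs F v = p} : ℝ) ∧
      (Nat.card {v : Fin n // numOccs F v = x ∧ numPosOccs F v = p} : ℝ) ≤
        (kappaT lam x p + ε) * (n : ℝ)

/-!
Negating all occurrences of a variable preserves satisfiability. If this is done for every variable
that occurs more often positively than negatively, the formula becomes totally unbalanced, and at
most `2 ^ u` formulae lead to the same one, `u` being the number of variables whose positive and
negative occurrences differ in number.

In a random formula the numbers of positive and of negative occurrences of a variable are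
asymptotically independent Poisson variables of parameter `λ / 2`, so the expected proportion of
variables with `x` occurrences, `p` of them positive, tends to `κ_{x,p}`. Replacing one clause
alters the occurrences of at most six variables, hence the number of such variables has variance at
most `36 m` and concentrates. For a typical formula the unbalanced version therefore obeys `κ̃`, and
since the `κ_{x,p}` sum to one, `u ≤ (s + ρ + ε Δ) n`.

A minimal solution is positively prime, so a typical satisfiable formula leads to one with
`X ≥ 2 ^ (s n)`, and `2 ^ ((ρ + ε Δ) n) X` bounds the number `2 ^ u` of formulae leading to it.
-/

open scoped BigOperators Finset Topology
open Function

section BoundedDifferences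

variable {α : Type*} [Fintype α]

lemma abs_sub_expect_le {f : α → ℝ} {d : ℝ} (hf : ∀ a b, |f a - f b| ≤ d) (a : α) :
    |f a - 𝔼 b, f b| ≤ d := by
  have : Nonempty α := ⟨a⟩
  calc |f a - 𝔼 b, f b| = |𝔼 b, (f a - f b)| := by
        rw [Finset.expect_sub_distrib, Fintype.expect_const]
    _ ≤ 𝔼 b, |f a - f b| := Finset.abs_expect_le _ _
    _ ≤ d := Finset.expect_le Finset.univ_nonempty fun b _ ↦ hf a b

lemma expect_sub_sq [Nonempty α] (f : α → ℝ) (c : ℝ) :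
    𝔼 a, (f a - c) ^ 2 = 𝔼 a, (f a - 𝔼 b, f b) ^ 2 + (𝔼 a, f a - c) ^ 2 := by
  set μ := 𝔼 b, f b
  have hexpand (a : α) :
      (f a - c) ^ 2 = (f a - μ) ^ 2 + (2 * (μ - c) * (f a - μ) + (μ - c) ^ 2) := by ring
  have hcenter : 𝔼 a, (f a - μ) = 0 := by
    rw [Finset.expect_sub_distrib, Fintype.expect_const, sub_self]
  simp only [hexpand, Finset.expect_add_distrib, ← Finset.mul_expect, hcenter,
    Fintype.expect_const, mul_zero, zero_add]

variable {ι : Type*} [DecidableEq ι] {β : ι → Type*} [∀ i, Fintype (β i)]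

lemma dependsOn_expect_update {f : (∀ i, β i) → ℝ} {i : ι} {s : Finset ι}
    (hf : DependsOn f (insert i s : Finset ι)) :
    DependsOn (fun g ↦ 𝔼 b, f (update g i b)) s := by
  refine fun x y hxy ↦ Finset.expect_congr rfl fun b _ ↦ hf fun j hj ↦ ?_
  rcases eq_or_ne j i with rfl | hji
  · simp
  · simpa [hji] using hxy j (by simpa [hji] using hj)

lemma abs_expect_update_sub_le {f : (∀ i, β i) → ℝ} {d : ι → ℝ}
    (hf : ∀ g i b, |f (update g i b) - f g| ≤ d i) (i : ι) (g : ∀ i, β i) (j : ι) (b : β j) :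
    |𝔼 a, f (update (update g j b) i a) - 𝔼 a, f (update g i a)| ≤ d j := by
  rw [← Finset.expect_sub_distrib]
  have : Nonempty (β i) := ⟨g i⟩
  refine (Finset.abs_expect_le _ _).trans (Finset.expect_le Finset.univ_nonempty fun a _ ↦ ?_)
  rcases eq_or_ne i j with rfl | hij
  · simpa using (abs_nonneg _).trans (hf g i a)
  · rw [update_comm hij.symm]
    exact hf _ j b

variable [Fintype ι]

-- The map `(g, b) ↦ (update g i b, g i)` is an involution of the index set of the double average.
lemma expect_expect_update (f : (∀ i, β i) → ℝ) (i : ι) :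
    𝔼 g, 𝔼 b, f (update g i b) = 𝔼 g, f g := by
  let swap : (∀ i, β i) × β i → (∀ i, β i) × β i := fun x ↦ (update x.1 i x.2, x.1 i)
  have hswap : Involutive swap := fun x ↦ by simp [swap]
  calc 𝔼 g, 𝔼 b, f (update g i b) = 𝔼 x, f (swap x).1 := (Finset.expect_product' ..).symm
    _ = 𝔼 x : (∀ i, β i) × β i, f x.1 :=
      Fintype.expect_equiv hswap.toPerm (fun x ↦ f (swap x).1) (fun x ↦ f x.1) fun _ ↦ rfl
    _ = 𝔼 g, 𝔼 _b : β i, f g := Finset.expect_product' _ _ fun g _ ↦ f g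
    _ = 𝔼 g, f g := Finset.expect_congr rfl fun g _ ↦
      have : Nonempty (β i) := ⟨g i⟩
      Fintype.expect_const _

lemma expect_sub_sq_le_expect_update {f : (∀ i, β i) → ℝ} {i : ι} {d : ℝ}
    (hf : ∀ g b, |f (update g i b) - f g| ≤ d) (c : ℝ) :
    𝔼 g, (f g - c) ^ 2 ≤ 𝔼 g, (𝔼 b, f (update g i b) - c) ^ 2 + d ^ 2 := by
  rw [← expect_expect_update (fun g ↦ (f g - c) ^ 2) i]
  rcases isEmpty_or_nonempty (∀ i, β i) with _ | _
  · simp [sq_nonneg]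
  rw [← Fintype.expect_const (ι := ∀ i, β i) (d ^ 2), ← Finset.expect_add_distrib]
  refine Finset.expect_le_expect fun g _ ↦ ?_
  have : Nonempty (β i) := ⟨g i⟩
  have hdiff (a b : β i) : |f (update g i a) - f (update g i b)| ≤ d := by
    simpa using hf (update g i b) a
  rw [expect_sub_sq (fun b ↦ f (update g i b)), add_comm]
  gcongr
  refine Finset.expect_le Finset.univ_nonempty fun b _ ↦ ?_
  exact sq_le_sq.2 ((abs_sub_expect_le hdiff b).trans (le_abs_self d))

lemma expect_sub_expect_sq_le_of_dependsOn {d : ι → ℝ} (s : Finset ι) :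
    ∀ {f : (∀ i, β i) → ℝ}, DependsOn f s → (∀ g i b, |f (update g i b) - f g| ≤ d i) →
      𝔼 g, (f g - 𝔼 g', f g') ^ 2 ≤ ∑ i ∈ s, d i ^ 2 := by
  induction s using Finset.induction_on with
  | empty =>
    intro f hdep _
    have hconst (g : ∀ i, β i) : f g - 𝔼 g', f g' = 0 := by
      have : Nonempty (∀ i, β i) := ⟨g⟩
      rw [Finset.expect_congr rfl fun g' _ ↦ hdep (x := g') (y := g) (by simp),
        Fintype.expect_const, sub_self]
    simp [hconst]
  | insert i s hi ih =>
    intro f hdep hf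
    calc 𝔼 g, (f g - 𝔼 g', f g') ^ 2
        ≤ 𝔼 g, (𝔼 b, f (update g i b) - 𝔼 g', f g') ^ 2 + d i ^ 2 :=
          expect_sub_sq_le_expect_update (fun g b ↦ hf g i b) _
      _ ≤ ∑ j ∈ s, d j ^ 2 + d i ^ 2 := by
          rw [← expect_expect_update f i]
          gcongr
          exact ih (dependsOn_expect_update hdep) (abs_expect_update_sub_le hf i)
      _ = ∑ j ∈ insert i s, d j ^ 2 := by rw [Finset.sum_insert hi, add_comm]

theorem expect_sub_expect_sq_le_sum_sq {f : (∀ i, β i) → ℝ} {d : ι → ℝ}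
    (hf : ∀ g i b, |f (update g i b) - f g| ≤ d i) :
    𝔼 g, (f g - 𝔼 g', f g') ^ 2 ≤ ∑ i, d i ^ 2 :=
  expect_sub_expect_sq_le_of_dependsOn Finset.univ
    (fun _ _ h ↦ congrArg f (funext fun i ↦ h i (Finset.mem_univ i))) hf

end BoundedDifferences

section UniformProbability

variable {α : Type*} [Fintype α]

/-- The probability of the event `P` for a uniformly random element of the finite type `α`, as the
expectation of its indicator. -/
noncomputable def uniformProb (P : α → Prop) : ℝ :=
  𝔼 a, if P a then 1 else 0

lemma uniformProb_nonneg (P : α → Prop) : 0 ≤ uniformProb P :=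
  Finset.expect_nonneg fun a _ ↦ by split_ifs <;> norm_num

lemma uniformProb_eq_card_div (P : α → Prop) :
    uniformProb P = (#{a | P a} : ℝ) / Fintype.card α := by
  rw [uniformProb, Fintype.expect_eq_sum_div_card, Finset.sum_boole]

lemma uniformProb_le_add {P Q R : α → Prop} (h : ∀ a, P a → Q a ∨ R a) :
    uniformProb P ≤ uniformProb Q + uniformProb R := by
  rw [uniformProb, uniformProb, uniformProb, ← Finset.expect_add_distrib]
  refine Finset.expect_le_expect fun a _ ↦ ?_
  have := h a
  split_ifs <;> simp_all

lemma uniformProb_exists_le {κ : Type*} (s : Finset κ) (P : κ → α → Prop) :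
    uniformProb (fun a ↦ ∃ k ∈ s, P k a) ≤ ∑ k ∈ s, uniformProb (P k) := by
  simp only [uniformProb]
  rw [← Finset.expect_sum_comm]
  refine Finset.expect_le_expect fun a _ ↦ ?_
  have hnonneg (k : κ) : (0 : ℝ) ≤ if P k a then 1 else 0 := by split_ifs <;> norm_num
  split_ifs with h
  · obtain ⟨k, hk, hPk⟩ := h
    simpa [hPk] using Finset.single_le_sum (fun k _ ↦ hnonneg k) hk
  · exact Finset.sum_nonneg fun k _ ↦ hnonneg k

lemma uniformProb_lt_abs_sub_le (f : α → ℝ) (c : ℝ) {t : ℝ} (ht : 0 < t) :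
    uniformProb (fun a ↦ t < |f a - c|) ≤ (𝔼 a, (f a - c) ^ 2) / t ^ 2 := by
  rw [uniformProb, Finset.expect_div]
  refine Finset.expect_le_expect fun a _ ↦ ?_
  split_ifs with h
  · rw [one_le_div (by positivity), ← sq_abs (f a - c)]
    gcongr
  · positivity

lemma expect_card_filter {V : Type*} [Fintype V] (P : V → α → Prop) :
    𝔼 a, (#{v | P v a} : ℝ) = ∑ v, uniformProb (P v) := by
  simp only [uniformProb]
  rw [← Finset.expect_sum_comm]
  simp only [Finset.sum_boole]

lemma uniformProb_comp_equiv {γ : Type*} [Fintype γ] (e : α ≃ γ) (P : γ → Prop) :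
    uniformProb (fun a ↦ P (e a)) = uniformProb P :=
  Fintype.expect_equiv e _ _ fun _ ↦ rfl

end UniformProbability

section OccurrenceCounts

variable {ι α : Type*} [Fintype ι] [DecidableEq ι] [Fintype α] [DecidableEq α] {a b : α}

lemma card_filter_preimages_eq (hab : a ≠ b) {S T : Finset ι} (hST : Disjoint S T) :
    #{g : ι → α | ({i | g i = a} : Finset ι) = S ∧ ({i | g i = b} : Finset ι) = T} =
      (Fintype.card α - 2) ^ (Fintype.card ι - #S - #T) := by
  let options (i : ι) : Finset α := if i ∈ S then {a} else if i ∈ T then {b} else {a, b}ᶜ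
  have hpi : ({g : ι → α | ({i | g i = a} : Finset ι) = S ∧ ({i | g i = b} : Finset ι) = T} :
      Finset (ι → α)) = Fintype.piFinset options := by
    ext g
    simp only [Finset.ext_iff, Finset.mem_filter, Finset.mem_univ, true_and,
      Fintype.mem_piFinset, ← forall_and, options]
    refine forall_congr' fun i ↦ ?_
    have hnotMem : i ∈ S → i ∉ T := fun hi ↦ Finset.disjoint_left.1 hST hi
    split_ifs <;> grind [Finset.mem_compl]
  have hcard (i : ι) : #(options i) = if i ∈ (S ∪ T)ᶜ then Fintype.card α - 2 else 1 := by
    have hcompl : #({a, b}ᶜ : Finset α) = Fintype.card α - 2 := by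
      rw [Finset.card_compl, Finset.card_pair hab]
    simp only [options, Finset.mem_compl, Finset.mem_union]
    split_ifs <;> simp_all only [Finset.card_singleton, true_or, or_true, not_true, or_self]
  rw [hpi, Fintype.card_piFinset, Finset.prod_congr rfl fun i _ ↦ hcard i, Finset.prod_ite_mem,
    Finset.univ_inter, Finset.prod_const, Finset.card_compl, Finset.card_union_of_disjoint hST,
    Nat.sub_sub]

theorem card_filter_card_preimages_eq (hab : a ≠ b) (p q : ℕ) :
    #{g : ι → α | #{i | g i = a} = p ∧ #{i | g i = b} = q} =
      (Fintype.card ι).choose p * (Fintype.card ι - p).choose q *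
        (Fintype.card α - 2) ^ (Fintype.card ι - p - q) := by
  let preimages (g : ι → α) : Σ _ : Finset ι, Finset ι := 
    ⟨Finset.univ.filter (g · = a), Finset.univ.filter (g · = b)⟩
  let pairs : Finset (Σ _ : Finset ι, Finset ι) :=
    (Finset.univ.powersetCard p).sigma fun S ↦ Sᶜ.powersetCard q
  have hmaps (g : ι → α) (hg : g ∈ ({g | #{i | g i = a} = p ∧ #{i | g i = b} = q} : Finset _)) :
      preimages g ∈ pairs := by
    simpa +contextual [preimages, pairs, Finset.subset_iff, hab.symm] using hg
  have hfiber : ∀ x ∈ pairs, #{g ∈ ({g | #{i | g i = a} = p ∧ #{i | g i = b} = q} :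
      Finset (ι → α)) | preimages g = x} = (Fintype.card α - 2) ^ (Fintype.card ι - p - q) := by
    rintro ⟨S, T⟩ hx
    obtain ⟨rfl, hT, rfl⟩ : #S = p ∧ T ⊆ Sᶜ ∧ #T = q := by
      simpa [pairs, Finset.mem_powersetCard] using hx
    rw [← card_filter_preimages_eq hab (Finset.subset_compl_iff_disjoint_left.1 hT)]
    congr 1
    ext g
    simp only [preimages, Finset.mem_filter, Finset.mem_univ, true_and, Sigma.mk.injEq, heq_eq_eq]
    exact and_iff_right_of_imp fun h ↦ by rw [h.1, h.2]; exact ⟨rfl, rfl⟩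
  have hpairs : #pairs = (Fintype.card ι).choose p * (Fintype.card ι - p).choose q := by
    rw [Finset.card_sigma, Finset.sum_const_nat (m := (Fintype.card ι - p).choose q),
      Finset.card_powersetCard, Finset.card_univ]
    intro S hS
    rw [Finset.card_powersetCard, Finset.card_compl, (Finset.mem_powersetCard.1 hS).2]
  rw [Finset.card_eq_sum_card_fiberwise hmaps, Finset.sum_const_nat hfiber, hpairs]

end OccurrenceCounts

section PoissonLimit

variable {l : Filter ℕ} {N : ℕ → ℕ} {lam : ℝ}

lemma tendsto_natCast_sub_div (hl : l ≤ atTop)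
    (hN : Tendsto (fun n ↦ (N n : ℝ) / n) l (𝓝 lam)) (i : ℕ) :
    Tendsto (fun n ↦ ((N n - i : ℕ) : ℝ) / n) l (𝓝 lam) := by
  have hi : Tendsto (fun n : ℕ ↦ (i : ℝ) / n) l (𝓝 0) :=
    (tendsto_const_div_atTop_nhds_zero_nat (i : ℝ)).mono_left hl
  refine tendsto_of_tendsto_of_tendsto_of_le_of_le (by simpa using hN.sub hi) hN
    (fun n ↦ ?_) (fun n ↦ ?_)
  · rw [← sub_div]
    gcongr
    rw [sub_le_iff_le_add, ← Nat.cast_add]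
    exact Nat.cast_le.2 le_tsub_add
  · dsimp only
    gcongr
    exact Nat.sub_le _ _

lemma tendsto_choose_div_pow (hl : l ≤ atTop)
    (hN : Tendsto (fun n ↦ (N n : ℝ) / n) l (𝓝 lam)) (x : ℕ) :
    Tendsto (fun n ↦ ((N n).choose x : ℝ) / (n : ℝ) ^ x) l (𝓝 (lam ^ x / x.factorial)) := by
  have hprod := (tendsto_finsetProd (Finset.range x)
    fun i _ ↦ tendsto_natCast_sub_div hl hN i).div_const (x.factorial : ℝ)
  rw [Finset.prod_const, Finset.card_range] at hprod
  refine hprod.congr fun n ↦ ?_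
  rw [Finset.prod_div_distrib, Finset.prod_const, Finset.card_range, ← Nat.cast_prod,
    ← Nat.descFactorial_eq_prod_range, Nat.descFactorial_eq_factorial_mul_choose]
  push_cast
  field_simp

lemma tendsto_one_sub_inv_pow (hl : l ≤ atTop)
    (hN : Tendsto (fun n ↦ (N n : ℝ) / n) l (𝓝 lam)) :
    Tendsto (fun n : ℕ ↦ (1 - 1 / (n : ℝ)) ^ N n) l (𝓝 (Real.exp (-lam))) := by
  have hexp : Tendsto (fun n : ℕ ↦ (1 + (-1) / (n : ℝ)) ^ n) l (𝓝 (Real.exp (-1))) :=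
    (Real.tendsto_one_add_div_pow_exp (-1)).mono_left hl
  have hrpow := hexp.rpow hN (Or.inl (Real.exp_pos _).ne')
  rw [← Real.exp_mul, neg_one_mul] at hrpow
  refine hrpow.congr' ?_
  filter_upwards [hl (eventually_ge_atTop 1)] with n hn
  have hn' : (1 : ℝ) ≤ n := by exact_mod_cast hn
  have hbase : 0 ≤ 1 + (-1) / (n : ℝ) := by
    rw [neg_div, ← sub_eq_add_neg, sub_nonneg, div_le_one (by positivity)]
    exact hn'
  rw [← Real.rpow_natCast, ← Real.rpow_mul hbase, mul_div_cancel₀ _ (by positivity),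
    Real.rpow_natCast, neg_div, ← sub_eq_add_neg]

lemma tendsto_choose_mul_choose_mul_pow_div (hl : l ≤ atTop)
    (hN : Tendsto (fun n ↦ (N n : ℝ) / n) l (𝓝 lam)) (p q : ℕ) :
    Tendsto (fun n ↦ ((N n).choose p * (N n - p).choose q *
        (2 * n - 2) ^ (N n - p - q) : ℕ) / (2 * n : ℝ) ^ N n) l
      (𝓝 (kappa lam (p + q) p)) := by
  have hlim := ((tendsto_choose_div_pow hl hN (p + q)).mul
    (tendsto_one_sub_inv_pow hl (tendsto_natCast_sub_div hl hN (p + q)))).const_mul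
      ((2 : ℝ) ^ (-((p + q : ℕ) : ℝ)) * ((p + q).choose p : ℝ))
  have hkappa : kappa lam (p + q) p = (2 : ℝ) ^ (-((p + q : ℕ) : ℝ)) * ((p + q).choose p : ℝ) *
      (lam ^ (p + q) / (p + q).factorial * Real.exp (-lam)) := by rw [kappa]; ring
  rw [hkappa]
  refine hlim.congr' ?_
  filter_upwards [hl (eventually_ge_atTop 1)] with n hn
  have hchoose : (N n).choose p * (N n - p).choose q = (N n).choose (p + q) * (p + q).choose p := by
    rw [Nat.choose_mul (Nat.le_add_right p q), Nat.add_sub_cancel_left]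
  rw [hchoose, Nat.sub_sub]
  rcases lt_or_ge (N n) (p + q) with hlt | hge
  · simp [Nat.choose_eq_zero_of_lt hlt]
  have hn' : (n : ℝ) ≠ 0 := by positivity
  have hbase : ((2 * n - 2 : ℕ) : ℝ) = 2 * n * (1 - 1 / n) := by
    rw [Nat.cast_sub (by omega)]
    push_cast
    field_simp
  have hpow : (2 * n : ℝ) ^ N n = (2 * n) ^ (N n - (p + q)) * (2 ^ (p + q) * n ^ (p + q)) := by
    rw [← mul_pow, ← pow_add, Nat.sub_add_cancel hge]
  push_cast [hbase, hpow]
  rw [mul_pow (2 * (n : ℝ)), Real.rpow_neg two_pos.le, ← Nat.cast_add, Real.rpow_natCast]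
  field_simp

end PoissonLimit

section Kappa

variable {lam : ℝ}

lemma kappa_add_symm (p q : ℕ) : kappa lam (p + q) q = kappa lam (p + q) p := by
  rw [kappa, kappa, Nat.choose_symm_add]

-- Thinning: the numbers of positive and negative occurrences are independent Poisson variables.
lemma kappa_two_mul_add (r : ℝ) (p q : ℕ) :
    kappa (2 * r) (p + q) p =
      (Real.exp (-r) * r ^ p / p.factorial) * (Real.exp (-r) * r ^ q / q.factorial) := by
  rw [kappa, Nat.cast_add_choose, Real.rpow_neg two_pos.le, Real.rpow_natCast,
    show -(2 * r) = -r + -r by ring, Real.exp_add, mul_pow, pow_add r]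
  field_simp

lemma hasSum_kappa (hlam : 0 ≤ lam) :
    HasSum (fun x : ℕ × ℕ ↦ kappa lam (x.1 + x.2) x.1) 1 := by
  have hpoisson := ProbabilityTheory.hasSum_one_poissonMeasure (lam / 2).toNNReal
  rw [Real.coe_toNNReal _ (by positivity)] at hpoisson
  have hnonneg : 0 ≤ fun n : ℕ ↦ Real.exp (-(lam / 2)) * (lam / 2) ^ n / n.factorial :=
    fun n ↦ by positivity
  have hprod := hpoisson.mul hpoisson (hpoisson.summable.mul_of_nonneg hpoisson.summable
    hnonneg hnonneg)
  simp only [← kappa_two_mul_add, mul_div_cancel₀ lam two_ne_zero, mul_one] at hprod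
  exact hprod

end Kappa

section SymmetricSum

variable {α E : Type*} [LinearOrder α] [AddCommGroup E] [UniformSpace E] [IsUniformAddGroup E]
  [CompleteSpace E] [T2Space E]

theorem tsum_eq_two_smul_tsum_lt_add_tsum_diag {f : α × α → E} (hf : Summable f)
    (hsymm : ∀ x, f x.swap = f x) :
    ∑' x, f x = 2 • ∑' x, (if x.1 < x.2 then f x else 0) + ∑' a, f (a, a) := by
  have hsplit (x : α × α) : f x = (if x.1 < x.2 then f x else 0) + (if x.2 < x.1 then f x else 0) +
      (if x.1 = x.2 then f x else 0) := by
    rcases lt_trichotomy x.1 x.2 with h | h | h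
    · simp [h, h.not_gt, h.ne]
    · simp [h]
    · simp [h, h.not_gt, h.ne']
  have hite (r : α → α → Prop) [DecidableRel r] :
      Summable fun x ↦ if r x.1 x.2 then f x else 0 :=
    (hf.indicator {x | r x.1 x.2}).congr fun x ↦ by simp [Set.indicator_apply]
  have hswap : ∑' x, (if x.2 < x.1 then f x else 0) = ∑' x, if x.1 < x.2 then f x else 0 := by
    rw [← (Equiv.prodComm α α).tsum_eq]
    simp [hsymm]
  have hdiag : ∑' x, (if x.1 = x.2 then f x else 0) = ∑' a, f (a, a) := by
    have hinj : Injective fun a : α ↦ (a, a) := fun a b h ↦ congrArg Prod.fst h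
    rw [← hinj.tsum_eq]
    · simp
    · rintro ⟨a, b⟩ hx
      have hab : a = b := by by_contra h; simp [h] at hx
      exact ⟨a, by simp [hab]⟩
  rw [tsum_congr hsplit, ((hite (· < ·)).add (hite (· > ·))).tsum_add (hite (· = ·)),
    (hite (· < ·)).tsum_add (hite (· > ·)), hswap, hdiag, two_nsmul]

end SymmetricSum

section OccurrenceMass

/-- The mass `s = Σ_{x > 2p} κ̃_{x,p}`: the limiting proportion of variables whose numbers of
positive and negative occurrences differ. -/
noncomputable def unbalancedMass (lam : ℝ) : ℝ :=
  ∑' x : ℕ × ℕ, if 2 * x.2 < x.1 then kappaT lam x.1 x.2 else 0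

/-- The mass `ρ = Σ_{2p > xmax} κ_{2p,p}`: the limiting proportion of variables with more than
`xmax` occurrences, of which exactly half are positive. -/
noncomputable def balancedTail (lam : ℝ) (xmax : ℕ) : ℝ :=
  ∑' p : ℕ, if xmax < 2 * p then kappa lam (2 * p) p else 0

variable {lam : ℝ}

lemma unbalancedMass_eq_two_nsmul_tsum :
    unbalancedMass lam =
      2 • ∑' x : ℕ × ℕ, if x.1 < x.2 then kappa lam (x.1 + x.2) x.1 else 0 := by
  have hinj : Injective fun x : ℕ × ℕ ↦ (x.1 + x.2, x.1) := by
    rintro ⟨p, q⟩ ⟨p', q'⟩ h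
    simp only [Prod.mk.injEq] at h ⊢
    omega
  rw [unbalancedMass, ← hinj.tsum_eq, nsmul_eq_mul, ← tsum_mul_left]
  · refine tsum_congr fun x ↦ ?_
    have hlt : 2 * x.1 < x.1 + x.2 ↔ x.1 < x.2 := by omega
    have hnot : x.1 < x.2 → ¬x.1 + x.2 < 2 * x.1 := by omega
    simp +contextual [kappaT, hlt, hnot]
  · rintro ⟨x, p⟩ hx
    have hlt : 2 * p < x := by by_contra h; simp [h] at hx
    exact ⟨(p, x - p), by simp; omega⟩

lemma unbalancedMass_add_tsum_kappa (hlam : 0 ≤ lam) :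
    unbalancedMass lam + ∑' p, kappa lam (2 * p) p = 1 := by
  have hsum := hasSum_kappa hlam
  rw [unbalancedMass_eq_two_nsmul_tsum, ← hsum.tsum_eq, tsum_eq_two_smul_tsum_lt_add_tsum_diag
    hsum.summable fun x ↦ by rw [Prod.fst_swap, Prod.snd_swap, add_comm, kappa_add_symm]]
  simp only [two_mul]

theorem sum_kappa_add_unbalancedMass_add_balancedTail (hlam : 0 ≤ lam) (xmax : ℕ) :
    ∑ p ∈ Finset.range (xmax / 2 + 1), kappa lam (2 * p) p + unbalancedMass lam +
      balancedTail lam xmax = 1 := by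
  have hdiag : Summable fun p ↦ kappa lam (2 * p) p := by
    have hinj : Injective fun p : ℕ ↦ (p, p) := fun p q h ↦ congrArg Prod.fst h
    simpa only [two_mul, comp_def] using (hasSum_kappa hlam).summable.comp_injective hinj
  have htail : balancedTail lam xmax =
      ∑' p : ↥((Finset.range (xmax / 2 + 1) : Set ℕ)ᶜ), kappa lam (2 * p) p := by
    rw [balancedTail, tsum_subtype _ fun p ↦ kappa lam (2 * p) p]
    refine tsum_congr fun p ↦ ?_
    have hmem : p ∈ ((Finset.range (xmax / 2 + 1) : Finset ℕ) : Set ℕ)ᶜ ↔ xmax < 2 * p := by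
      simp only [Set.mem_compl_iff, Finset.mem_coe, Finset.mem_range]
      omega
    simp only [Set.indicator_apply, hmem]
  rw [add_right_comm, htail, Summable.sum_add_tsum_compl hdiag, add_comm]
  exact unbalancedMass_add_tsum_kappa hlam

end OccurrenceMass

section OccurrenceProfile

/-- The 3-CNF formulae with `m` ordered clauses over `n` variables. -/
abbrev Formula (m n : ℕ) : Type := Fin m → Fin 3 → Fin n × Bool

variable {m n : ℕ}

/-- The number of positions of the formula `F` that hold the literal `ℓ`. -/
def litCount (F : Formula m n) (ℓ : Fin n × Bool) : ℕ :=
  #{ij : Fin m × Fin 3 | F ij.1 ij.2 = ℓ}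

/-- The number of variables with exactly `p` positive and `q` negative occurrences in `F`. -/
def profileCount (F : Formula m n) (p q : ℕ) : ℕ :=
  #{v | litCount F (v, true) = p ∧ litCount F (v, false) = q}

lemma numPosOccs_eq_litCount (F : Formula m n) (v : Fin n) :
    numPosOccs F v = litCount F (v, true) := by
  rw [numPosOccs, Nat.card_eq_fintype_card, Fintype.card_subtype, litCount]

lemma numOccs_eq_litCount_add_litCount (F : Formula m n) (v : Fin n) :
    numOccs F v = litCount F (v, true) + litCount F (v, false) := by
  rw [numOccs, Nat.card_eq_fintype_card, Fintype.card_subtype, litCount, litCount,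
    ← Finset.card_union_of_disjoint, ← Finset.filter_or]
  · congr! 2 with ij
    rcases F ij.1 ij.2 with ⟨w, b⟩
    cases b <;> simp
  · exact Finset.disjoint_filter.2 fun _ _ h ↦ by simp [h]

lemma natCard_numOccs_numPosOccs (F : Formula m n) (p q : ℕ) :
    Nat.card {v : Fin n // numOccs F v = p + q ∧ numPosOccs F v = p} = profileCount F p q := by
  rw [Nat.card_eq_fintype_card, Fintype.card_subtype, profileCount]
  congr! 2 with v
  rw [numOccs_eq_litCount_add_litCount, numPosOccs_eq_litCount]
  omega

lemma litCount_update {F : Formula m n} {i : Fin m} {C : Fin 3 → Fin n × Bool} {v : Fin n}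
    (hF : ∀ j, (F i j).1 ≠ v) (hC : ∀ j, (C j).1 ≠ v) (b : Bool) :
    litCount (update F i C) (v, b) = litCount F (v, b) := by
  unfold litCount
  congr! 2 with ⟨i', j⟩
  rcases eq_or_ne i' i with rfl | hi
  · have hFj : F i' j ≠ (v, b) := fun h ↦ hF j (congrArg Prod.fst h)
    have hCj : C j ≠ (v, b) := fun h ↦ hC j (congrArg Prod.fst h)
    simp [hFj, hCj]
  · simp [hi]

lemma profileCount_update_le (F : Formula m n) (i : Fin m) (C : Fin 3 → Fin n × Bool) (p q : ℕ) :
    profileCount (update F i C) p q ≤ profileCount F p q + 6 := by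
  let touched (D : Fin 3 → Fin n × Bool) : Finset (Fin n) := Finset.univ.image fun j ↦ (D j).1
  have hcard (D : Fin 3 → Fin n × Bool) : #(touched D) ≤ 3 := Finset.card_image_le
  have hsub : ({v | litCount (update F i C) (v, true) = p ∧
      litCount (update F i C) (v, false) = q} : Finset (Fin n)) ⊆
      ({v | litCount F (v, true) = p ∧ litCount F (v, false) = q} : Finset (Fin n)) ∪
        (touched (F i) ∪ touched C) := by
    intro v hv
    by_cases hv' : v ∈ touched (F i) ∪ touched C
    · exact Finset.mem_union_right _ hv'
    · have hF (j : Fin 3) : (F i j).1 ≠ v := by simp_all [touched]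
      have hC (j : Fin 3) : (C j).1 ≠ v := by simp_all [touched]
      simp only [Finset.mem_filter, litCount_update hF hC] at hv
      exact Finset.mem_union_left _ (Finset.mem_filter.2 hv)
  calc profileCount (update F i C) p q
      ≤ profileCount F p q + (#(touched (F i)) + #(touched C)) :=
        (Finset.card_le_card hsub).trans <| (Finset.card_union_le _ _).trans <|
          Nat.add_le_add_left (Finset.card_union_le _ _) _
    _ ≤ profileCount F p q + 6 := by gcongr; exact Nat.add_le_add (hcard _) (hcard _)

lemma abs_profileCount_update_sub_le (F : Formula m n) (i : Fin m) (C : Fin 3 → Fin n × Bool)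
    (p q : ℕ) : |(profileCount (update F i C) p q : ℝ) - profileCount F p q| ≤ 6 := by
  have hle : (profileCount (update F i C) p q : ℝ) ≤ profileCount F p q + 6 := by
    exact_mod_cast profileCount_update_le F i C p q
  have hge : (profileCount F p q : ℝ) ≤ profileCount (update F i C) p q + 6 := by
    have := profileCount_update_le (update F i C) i (F i) p q
    rw [update_idem, update_eq_self] at this
    exact_mod_cast this
  rw [abs_le]
  constructor <;> linarith

theorem expect_profileCount_sub_sq_le (p q : ℕ) :
    𝔼 F : Formula m n, ((profileCount F p q : ℝ) - 𝔼 G : Formula m n, (profileCount G p q : ℝ)) ^ 2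
      ≤ 36 * m := by
  refine (expect_sub_expect_sq_le_sum_sq (d := fun _ ↦ 6)
    fun F i C ↦ abs_profileCount_update_sub_le F i C p q).trans (le_of_eq ?_)
  rw [Finset.sum_const, Finset.card_univ, Fintype.card_fin, nsmul_eq_mul]
  ring

lemma uniformProb_formula (P : Formula m n → Prop) :
    uniformProb P = (Nat.card {F // P F} : ℝ) / (2 * (n : ℝ)) ^ (3 * m) := by
  have hcard : Fintype.card (Formula m n) = (2 * n) ^ (3 * m) := by
    simp only [Fintype.card_fun, Fintype.card_prod, Fintype.card_fin, Fintype.card_bool]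
    rw [← pow_mul, mul_comm n]
  rw [uniformProb_eq_card_div, hcard, Nat.card_eq_fintype_card, Fintype.card_subtype,
    Nat.cast_pow, Nat.cast_mul, Nat.cast_ofNat]

lemma uniformProb_litCount_eq (v : Fin n) (p q : ℕ) :
    uniformProb (fun F : Formula m n ↦ litCount F (v, true) = p ∧ litCount F (v, false) = q) =
      ((3 * m).choose p * (3 * m - p).choose q * (2 * n - 2) ^ (3 * m - p - q) : ℕ) /
        (2 * n : ℝ) ^ (3 * m) := by
  have hcount := card_filter_card_preimages_eq (ι := Fin m × Fin 3)
    (show (v, true) ≠ (v, false) by simp) p q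
  simp only [Fintype.card_prod, Fintype.card_fin, Fintype.card_bool, mul_comm m, mul_comm n]
    at hcount
  rw [← uniformProb_comp_equiv (Equiv.curry _ _ _), uniformProb_eq_card_div, ← hcount]
  simp [litCount, mul_comm, Equiv.curry]

lemma expect_profileCount (p q : ℕ) :
    𝔼 F : Formula m n, (profileCount F p q : ℝ) =
      n * (((3 * m).choose p * (3 * m - p).choose q * (2 * n - 2) ^ (3 * m - p - q) : ℕ) /
        (2 * n : ℝ) ^ (3 * m)) := by
  have := expect_card_filter
    fun (v : Fin n) (F : Formula m n) ↦ litCount F (v, true) = p ∧ litCount F (v, false) = q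
  simp only [uniformProb_litCount_eq, Finset.sum_const, Finset.card_univ, Fintype.card_fin,
    nsmul_eq_mul] at this
  rw [← this]
  simp only [profileCount]
  congr!

end OccurrenceProfile

section Typical

variable {l : Filter ℕ} {m : ℕ → ℕ} {c : ℝ}

lemma tendsto_expect_profileCount_div (hl : l ≤ atTop)
    (hm : Tendsto (fun n ↦ (m n : ℝ) / n) l (𝓝 c)) (p q : ℕ) :
    Tendsto (fun n ↦ (𝔼 F : Formula (m n) n, (profileCount F p q : ℝ)) / n) l
      (𝓝 (kappa (3 * c) (p + q) p)) := by
  have hN : Tendsto (fun n ↦ ((3 * m n : ℕ) : ℝ) / n) l (𝓝 (3 * c)) := by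
    simpa [mul_div_assoc] using hm.const_mul 3
  refine (tendsto_choose_mul_choose_mul_pow_div hl hN p q).congr' ?_
  filter_upwards [hl (eventually_gt_atTop 0)] with n hn
  rw [expect_profileCount, mul_div_cancel_left₀ _ (by positivity)]

theorem tendsto_uniformProb_lt_abs_profileCount_sub (hl : l ≤ atTop)
    (hm : Tendsto (fun n ↦ (m n : ℝ) / n) l (𝓝 c)) {δ : ℝ} (hδ : 0 < δ) (p q : ℕ) :
    Tendsto (fun n ↦ uniformProb fun F : Formula (m n) n ↦
      δ * n < |(profileCount F p q : ℝ) - kappa (3 * c) (p + q) p * n|) l (𝓝 0) := by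
  set κ := kappa (3 * c) (p + q) p
  let mean (n : ℕ) : ℝ := 𝔼 F : Formula (m n) n, (profileCount F p q : ℝ)
  have hlim : Tendsto (fun n : ℕ ↦ (36 * ((m n : ℝ) / n * (1 / n)) + (mean n / n - κ) ^ 2) / δ ^ 2)
      l (𝓝 0) := by
    have hinv : Tendsto (fun n : ℕ ↦ 1 / (n : ℝ)) l (𝓝 0) :=
      tendsto_one_div_atTop_nhds_zero_nat.mono_left hl
    have hmean := ((tendsto_expect_profileCount_div hl hm p q).sub_const κ).pow 2
    rw [sub_self, zero_pow two_ne_zero] at hmean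
    simpa only [mul_zero, add_zero, zero_div] using
      (((hm.mul hinv).const_mul 36).add hmean).div_const (δ ^ 2)
  refine squeeze_zero' (Eventually.of_forall fun n ↦ uniformProb_nonneg _) ?_ hlim
  filter_upwards [hl (eventually_gt_atTop 0)] with n hn
  calc _ ≤ (𝔼 F : Formula (m n) n, ((profileCount F p q : ℝ) - κ * n) ^ 2) / (δ * n) ^ 2 :=
        uniformProb_lt_abs_sub_le _ _ (by positivity)
    _ ≤ (36 * m n + (mean n - κ * n) ^ 2) / (δ * n) ^ 2 := by
        rcases isEmpty_or_nonempty (Formula (m n) n) with _ | _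
        · rw [Finset.univ_eq_empty, Finset.expect_empty, zero_div]
          positivity
        rw [expect_sub_sq]
        gcongr
        exact expect_profileCount_sub_sq_le p q
    _ = _ := by field_simp

/-- The formula `F` is typical: for all `p, q ≤ k`, the number of variables with `p` positive and
`q` negative occurrences is within `δ n` of the value `κ_{p+q,p} n` predicted by the Poisson
limit. -/
def Typical {m n : ℕ} (lam δ : ℝ) (k : ℕ) (F : Formula m n) : Prop :=
  ∀ p ≤ k, ∀ q ≤ k, |(profileCount F p q : ℝ) - kappa lam (p + q) p * n| ≤ δ * n

theorem tendsto_uniformProb_not_typical (hl : l ≤ atTop)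
    (hm : Tendsto (fun n ↦ (m n : ℝ) / n) l (𝓝 c)) {δ : ℝ} (hδ : 0 < δ) (k : ℕ) :
    Tendsto (fun n ↦ uniformProb fun F : Formula (m n) n ↦ ¬Typical (3 * c) δ k F) l (𝓝 0) := by
  let types := Finset.range (k + 1) ×ˢ Finset.range (k + 1)
  have hlim := tendsto_finsetSum types fun x _ ↦
    tendsto_uniformProb_lt_abs_profileCount_sub hl hm hδ x.1 x.2
  rw [Finset.sum_const_zero] at hlim
  refine squeeze_zero (fun n ↦ uniformProb_nonneg _) (fun n ↦ ?_) hlim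
  refine le_of_eq_of_le (congrArg uniformProb (funext fun F ↦ propext ?_))
    (uniformProb_exists_le types _)
  simp [Typical, types, and_assoc]

end Typical

section Unbalance

variable {m n : ℕ}

/-- The formula obtained from `F` by negating all occurrences of the variables marked by `σ`. -/
def flipSigns (σ : Fin n → Bool) (F : Formula m n) : Formula m n :=
  fun i j ↦ ((F i j).1, xor (F i j).2 (σ (F i j).1))

lemma flipSigns_flipSigns (σ : Fin n → Bool) (F : Formula m n) :
    flipSigns σ (flipSigns σ F) = F := by
  funext i j
  simp [flipSigns]

lemma litCount_flipSigns (σ : Fin n → Bool) (F : Formula m n) (v : Fin n) (b : Bool) :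
    litCount (flipSigns σ F) (v, b) = litCount F (v, xor b (σ v)) := by
  unfold litCount
  congr! 2 with ij
  simp only [flipSigns, Prod.ext_iff]
  refine and_congr_right fun hv ↦ ?_
  rw [hv]
  cases (F ij.1 ij.2).2 <;> cases b <;> simp

lemma satisfies_flipSigns {F : Formula m n} {A : Fin n → Bool} (hA : Satisfies F A)
    (σ : Fin n → Bool) : Satisfies (flipSigns σ F) fun v ↦ xor (A v) (σ v) := by
  intro i
  obtain ⟨j, hj⟩ := hA i
  exact ⟨j, by simp [flipSigns, hj]⟩

/-- The marking of the variables with more positive than negative occurrences in `F`. -/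
def positiveMajority (F : Formula m n) (v : Fin n) : Bool :=
  decide (litCount F (v, false) < litCount F (v, true))

/-- The totally unbalanced formula obtained from `F` by negating the variables with more positive
than negative occurrences. -/
def unbalance (F : Formula m n) : Formula m n :=
  flipSigns (positiveMajority F) F

/-- The variables whose numbers of positive and negative occurrences in `F` differ. -/
def unbalancedVars (F : Formula m n) : Finset (Fin n) :=
  {v | litCount F (v, true) ≠ litCount F (v, false)}

lemma litCount_unbalance_true (F : Formula m n) (v : Fin n) :
    litCount (unbalance F) (v, true) = min (litCount F (v, true)) (litCount F (v, false)) := by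
  rw [unbalance, litCount_flipSigns]
  by_cases hv : litCount F (v, false) < litCount F (v, true)
  · simp [positiveMajority, hv, hv.le]
  · simp [positiveMajority, hv, not_lt.1 hv]

lemma litCount_unbalance_false (F : Formula m n) (v : Fin n) :
    litCount (unbalance F) (v, false) = max (litCount F (v, true)) (litCount F (v, false)) := by
  rw [unbalance, litCount_flipSigns]
  by_cases hv : litCount F (v, false) < litCount F (v, true)
  · simp [positiveMajority, hv, hv.le]
  · simp [positiveMajority, hv, not_lt.1 hv]

lemma profileCount_unbalance_of_gt (F : Formula m n) {p q : ℕ} (hqp : q < p) :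
    profileCount (unbalance F) p q = 0 := by
  simp only [profileCount, litCount_unbalance_true, litCount_unbalance_false,
    Finset.card_eq_zero, Finset.filter_eq_empty_iff]
  omega

lemma profileCount_unbalance_self (F : Formula m n) (p : ℕ) :
    profileCount (unbalance F) p p = profileCount F p p := by
  simp only [profileCount, litCount_unbalance_true, litCount_unbalance_false]
  congr! 2
  omega

lemma profileCount_unbalance_of_lt (F : Formula m n) {p q : ℕ} (hpq : p < q) :
    profileCount (unbalance F) p q = profileCount F p q + profileCount F q p := by
  simp only [profileCount, litCount_unbalance_true, litCount_unbalance_false]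
  rw [← Finset.card_union_of_disjoint, ← Finset.filter_or]
  · congr! 2
    omega
  · exact Finset.disjoint_filter.2 fun _ _ ↦ by omega

lemma unbalancedVars_unbalance (F : Formula m n) :
    unbalancedVars (unbalance F) = unbalancedVars F := by
  simp only [unbalancedVars, litCount_unbalance_true, litCount_unbalance_false]
  refine Finset.filter_congr fun v _ ↦ ?_
  omega

lemma card_filter_unbalance_eq_le (G : Formula m n) :
    #{F : Formula m n | unbalance F = G} ≤ 2 ^ #(unbalancedVars G) := by
  have hsub : ({F | unbalance F = G} : Finset (Formula m n)) ⊆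
      (unbalancedVars G).powerset.image fun T ↦ flipSigns (fun v ↦ decide (v ∈ T)) G := by
    intro F hF
    obtain rfl : unbalance F = G := by simpa using hF
    rw [unbalancedVars_unbalance]
    refine Finset.mem_image.2 ⟨Finset.univ.filter (positiveMajority F ·),
      Finset.mem_powerset.2 fun v hv ↦ ?_, ?_⟩
    · have hlt : litCount F (v, false) < litCount F (v, true) := by
        simpa [positiveMajority] using hv
      simpa [unbalancedVars] using hlt.ne'
    · simpa [unbalance] using flipSigns_flipSigns (positiveMajority F) F
  exact (Finset.card_le_card hsub).trans (Finset.card_image_le.trans (Finset.card_powerset _).le)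

lemma card_unbalancedVars_add_sum_profileCount_le (F : Formula m n) (k : ℕ) :
    #(unbalancedVars F) + ∑ p ∈ Finset.range k, profileCount F p p ≤ n := by
  have hbalanced : ∑ p ∈ Finset.range k, profileCount F p p ≤ #(unbalancedVars F)ᶜ := by
    calc ∑ p ∈ Finset.range k, profileCount F p p
        = ∑ p ∈ Finset.range k, #{v ∈ (unbalancedVars F)ᶜ | litCount F (v, true) = p} := by
          refine Finset.sum_congr rfl fun p _ ↦ congrArg Finset.card ?_
          ext v
          simp only [unbalancedVars, Finset.mem_filter, Finset.mem_compl, Finset.mem_univ,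
            true_and, ne_eq, not_not]
          omega
      _ ≤ #(unbalancedVars F)ᶜ := by
          rw [Finset.sum_card_fiberwise_eq_card_filter]
          exact Finset.card_filter_le _ _
  calc _ ≤ #(unbalancedVars F) + #(unbalancedVars F)ᶜ := Nat.add_le_add_left hbalanced _
    _ = n := by rw [Finset.card_add_card_compl, Fintype.card_fin]

variable {lam : ℝ} {xmax : ℕ} {F : Formula m n}

theorem obeysKT_unbalance {ε : ℝ} (hε : 0 ≤ ε) (hF : Typical lam (ε / 2) xmax F) :
    ObeysKT lam ε xmax (unbalance F) := by
  intro x p hpx hx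
  obtain ⟨q, rfl⟩ := Nat.exists_eq_add_of_le hpx
  have hpq := abs_le.1 (hF p (by omega) q (by omega))
  have hqp := abs_le.1 (hF q (by omega) p (by omega))
  rw [add_comm q p, kappa_add_symm] at hqp
  have hεn : 0 ≤ ε * n := by positivity
  rw [natCard_numOccs_numPosOccs]
  rcases lt_trichotomy p q with h | rfl | h
  · rw [profileCount_unbalance_of_lt F h, kappaT, if_neg (by omega), if_pos (by omega)]
    push_cast
    constructor <;> linarith
  · rw [profileCount_unbalance_self, kappaT, if_neg (by omega), if_neg (by omega)]
    constructor <;> linarith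
  · rw [profileCount_unbalance_of_gt F h, kappaT, if_pos (by omega)]
    push_cast
    constructor <;> linarith

theorem card_unbalancedVars_le (hlam : 0 ≤ lam) {δ : ℝ} (hδ : 0 ≤ δ)
    (hF : Typical lam δ xmax F) :
    (#(unbalancedVars F) : ℝ) ≤
      (unbalancedMass lam + balancedTail lam xmax + δ * (xmax / 2 + 1)) * n := by
  set K := xmax / 2 + 1
  have hcount : (#(unbalancedVars F) : ℝ) + ∑ p ∈ Finset.range K, (profileCount F p p : ℝ) ≤ n := by
    exact_mod_cast card_unbalancedVars_add_sum_profileCount_le F K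
  have hprofile : ∑ p ∈ Finset.range K, (kappa lam (2 * p) p - δ) * n ≤
      ∑ p ∈ Finset.range K, (profileCount F p p : ℝ) := by
    refine Finset.sum_le_sum fun p hp ↦ ?_
    have hpx : p ≤ xmax := by have := Finset.mem_range.1 hp; omega
    have := (abs_le.1 (hF p hpx p hpx)).1
    rw [two_mul]
    linarith
  rw [← Finset.sum_mul, Finset.sum_sub_distrib, Finset.sum_const, Finset.card_range,
    nsmul_eq_mul] at hprofile
  have hmass := sum_kappa_add_unbalancedMass_add_balancedTail hlam xmax
  have hK : (K : ℝ) * δ ≤ δ * (xmax / 2 + 1) := by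
    rw [mul_comm, Nat.cast_add_one]
    gcongr
    exact Nat.cast_div_le
  calc (#(unbalancedVars F) : ℝ)
      ≤ (1 - (∑ p ∈ Finset.range K, kappa lam (2 * p) p - K * δ)) * n := by linarith
    _ ≤ _ := by gcongr; linarith

end Unbalance

section PositivelyPrime

variable {m n : ℕ} {F : Formula m n}

theorem exists_isPPS (hF : ∃ A, Satisfies F A) : ∃ A, IsPPS F A := by
  obtain ⟨A, hA⟩ := (Set.toFinite {A | Satisfies F A}).exists_minimal hF
  refine ⟨A, hA.prop, fun v hv hsat ↦ ?_⟩
  have hlt : update A v false < A := update_lt_self_iff.2 (by simp [hv])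
  exact hA.not_lt hsat hlt

/-- The random variable `X`: on the formulae that obey the distribution `κ̃` it is the number of
positively prime solutions, skewed by the factor `2 ^ (s n)`; elsewhere it is `0`. -/
noncomputable def skewedPPSCount (lam ε : ℝ) (xmax : ℕ) (F : Formula m n) : ℝ :=
  if ObeysKT lam ε xmax F then
    (2 : ℝ) ^ (unbalancedMass lam * (n : ℝ)) * (Nat.card {A : Fin n → Bool // IsPPS F A} : ℝ)
  else 0

lemma skewedPPSCount_nonneg (lam ε : ℝ) (xmax : ℕ) (F : Formula m n) :
    0 ≤ skewedPPSCount lam ε xmax F := by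
  unfold skewedPPSCount
  positivity

variable {lam ε : ℝ} {xmax : ℕ}

lemma two_rpow_le_skewedPPSCount (hobeys : ObeysKT lam ε xmax F) (hF : ∃ A, Satisfies F A) :
    (2 : ℝ) ^ (unbalancedMass lam * n) ≤ skewedPPSCount lam ε xmax F := by
  obtain ⟨A, hA⟩ := exists_isPPS hF
  have : Nonempty {A : Fin n → Bool // IsPPS F A} := ⟨A, hA⟩
  have hone : (1 : ℝ) ≤ Nat.card {A : Fin n → Bool // IsPPS F A} := by
    exact_mod_cast Nat.card_pos
  rw [skewedPPSCount, if_pos hobeys]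
  exact le_mul_of_one_le_right (by positivity) hone

theorem natCard_typical_satisfiable_le (hlam : 0 ≤ lam) (hε : 0 ≤ ε) :
    (Nat.card {F : Formula m n // Typical lam (ε / 2) xmax F ∧ ∃ A, Satisfies F A} : ℝ) ≤
      2 ^ ((balancedTail lam xmax + ε * ((xmax / 2 + 1) / 2)) * n) *
        ∑ G : Formula m n, skewedPPSCount lam ε xmax G := by
  set S : Finset (Formula m n) := {F | Typical lam (ε / 2) xmax F ∧ ∃ A, Satisfies F A}
  rw [Nat.card_eq_fintype_card, Fintype.card_subtype,
    Finset.card_eq_sum_card_fiberwise (f := unbalance) (t := Finset.univ) (by simp), Nat.cast_sum,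
    Finset.mul_sum]
  refine Finset.sum_le_sum fun G _ ↦ ?_
  rcases Finset.eq_empty_or_nonempty {F ∈ S | unbalance F = G} with hempty | ⟨F, hF⟩
  · rw [hempty, Finset.card_empty, Nat.cast_zero]
    exact mul_nonneg (by positivity) (skewedPPSCount_nonneg ..)
  obtain ⟨⟨htyp, A, hA⟩, rfl⟩ : (Typical lam (ε / 2) xmax F ∧ ∃ A, Satisfies F A) ∧
      unbalance F = G := by simpa [S] using hF
  calc (#{F' ∈ S | unbalance F' = unbalance F} : ℝ)
      ≤ (2 : ℝ) ^ (#(unbalancedVars F) : ℝ) := by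
        rw [Real.rpow_natCast, ← unbalancedVars_unbalance]
        exact_mod_cast (Finset.card_le_card (Finset.filter_subset_filter _ S.subset_univ)).trans
          (card_filter_unbalance_eq_le _)
    _ ≤ 2 ^ ((unbalancedMass lam + balancedTail lam xmax + ε / 2 * (xmax / 2 + 1)) * n) :=
        Real.rpow_le_rpow_of_exponent_le one_le_two
          (card_unbalancedVars_le hlam (by positivity) htyp)
    _ = 2 ^ ((balancedTail lam xmax + ε * ((xmax / 2 + 1) / 2)) * n) *
          2 ^ (unbalancedMass lam * n) := by
        rw [← Real.rpow_add two_pos]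
        ring_nf
    _ ≤ _ := by
        gcongr
        exact two_rpow_le_skewedPPSCount (obeysKT_unbalance hε htyp)
          ⟨_, satisfies_flipSigns hA _⟩

end PositivelyPrime

lemma tendsto_toNat_num_mul_div {c : ℚ} (hc : 0 ≤ c) :
    Tendsto (fun n : ℕ ↦ ((c * (n : ℚ)).num.toNat : ℝ) / n)
      (atTop ⊓ 𝓟 {n : ℕ | (c * (n : ℚ)).den = 1}) (𝓝 (c : ℝ)) := by
  refine tendsto_const_nhds.congr' ?_
  filter_upwards [mem_inf_of_left (eventually_gt_atTop 0),
    mem_inf_of_right (mem_principal_self _)] with n hn hden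
  have hnum : (((c * n).num.toNat : ℤ) : ℚ) = c * n := by
    rw [Int.toNat_of_nonneg (Rat.num_nonneg.2 (by positivity)), (Rat.den_eq_one_iff _).1 hden]
  have hnum' : ((c * (n : ℚ)).num.toNat : ℝ) = c * n := by exact_mod_cast hnum
  rw [hnum', mul_div_cancel_right₀ _ (by positivity)]

theorem sat_prob_dominated_by_skewed_PPS_expectation_general {l : Filter ℕ} (hl : l ≤ atTop)
    {m : ℕ → ℕ} {c : ℝ} (hm : Tendsto (fun n ↦ (m n : ℝ) / n) l (𝓝 c)) (xmax : ℕ) {ε : ℝ}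
    (hε : 0 < ε)
    (H : Tendsto (fun n : ℕ ↦
        (2 : ℝ) ^ ((balancedTail (3 * c) xmax + ε * (((xmax : ℝ) / 2 + 1) / 2)) * (n : ℝ)) *
          ((∑ F : Formula (m n) n, skewedPPSCount (3 * c) ε xmax F) / (2 * (n : ℝ)) ^ (3 * m n)))
      l (𝓝 0)) :
    Tendsto (fun n : ℕ ↦
        (Nat.card {F : Formula (m n) n // ∃ A : Fin n → Bool, Satisfies F A} : ℝ) /
          (2 * (n : ℝ)) ^ (3 * m n)) l (𝓝 0) := by
  rcases l.eq_or_neBot with rfl | _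
  · exact tendsto_bot
  have hc : 0 ≤ c := ge_of_tendsto' hm fun n ↦ by positivity
  have hsum := H.add (tendsto_uniformProb_not_typical hl hm (half_pos hε) xmax)
  rw [add_zero] at hsum
  simp only [← uniformProb_formula]
  refine squeeze_zero (fun n ↦ uniformProb_nonneg _) (fun n ↦ ?_) hsum
  calc uniformProb (fun F : Formula (m n) n ↦ ∃ A, Satisfies F A)
      ≤ uniformProb (fun F : Formula (m n) n ↦ Typical (3 * c) (ε / 2) xmax F ∧
          ∃ A, Satisfies F A) +
        uniformProb (fun F : Formula (m n) n ↦ ¬Typical (3 * c) (ε / 2) xmax F) :=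
        uniformProb_le_add fun F hF ↦ (em _).imp_left (⟨·, hF⟩)
    _ ≤ _ := by
        rw [uniformProb_formula, ← mul_div_assoc]
        gcongr
        exact natCard_typical_satisfiable_le (by positivity) hε.le

/-- domination of the satisfiability probability by the skewed expectation
of PPSs of typical totally unbalanced formulae.  With `ρ = Σ_{2p > xmax} κ_{2p,p}`,
`Δ = (xmax/2 + 1)/2` and `s = Σ_{x > 2p} κ̃_{x,p}`, if
`2^{(ρ + εΔ)n} · E[X] → 0` (where `X(F) = 2^{s n} · #PPS(F)` on formulae obeying `κ̃`
to accuracy `(ε, xmax)`, and `0` otherwise), then the probability of satisfiability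
tends to `0` as `n → ∞` along the integers `n` with `c·n ∈ ℕ`. -/
theorem sat_prob_dominated_by_skewed_PPS_expectation
    (c : ℚ) (hc : 0 < c) (xmax : ℕ) (hx : 0 < xmax) (hev : Even xmax)
    (ε : ℝ) (hε : 0 < ε)
    (H : Tendsto (fun n : ℕ =>
        (2 : ℝ) ^ (((∑' p : ℕ, if xmax < 2 * p then kappa (3 * (c : ℝ)) (2 * p) p else 0)
              + ε * (((xmax : ℝ) / 2 + 1) / 2)) * (n : ℝ)) *
          ((∑ F : Fin ((c * (n : ℚ)).num.toNat) → Fin 3 → Fin n × Bool,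
              (if ObeysKT (3 * (c : ℝ)) ε xmax F then
                  (2 : ℝ) ^ ((∑' q : ℕ × ℕ,
                      if 2 * q.2 < q.1 then kappaT (3 * (c : ℝ)) q.1 q.2 else 0) * (n : ℝ)) *
                    (Nat.card {A : Fin n → Bool // IsPPS F A} : ℝ)
                else 0)) /
            ((2 * (n : ℝ)) ^ (3 * (c * (n : ℚ)).num.toNat))))
      (atTop ⊓ 𝓟 {n : ℕ | (c * (n : ℚ)).den = 1}) (nhds 0)) :
    Tendsto (fun n : ℕ =>
        (Nat.card {F : Fin ((c * (n : ℚ)).num.toNat) → Fin 3 → Fin n × Bool //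
            ∃ A : Fin n → Bool, Satisfies F A} : ℝ) /
          ((2 * (n : ℝ)) ^ (3 * (c * (n : ℚ)).num.toNat)))
      (atTop ⊓ 𝓟 {n : ℕ | (c * (n : ℚ)).den = 1}) (nhds 0) :=
  sat_prob_dominated_by_skewed_PPS_expectation_general inf_le_left
    (tendsto_toNat_num_mul_div hc.le) xmax hε H
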